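/- arXiv:1210.4806 — 2 statements merged into one kernel-verified Lean document; each statement's English description precedes it below -/
import Mathlib

section
/- Let F be a field of characteristic zero, G a group (not necessarily finite), and V₁ and V₂ two finite-dimensional F-linear representations of G, each semisimple (i.e., semisimple as a module over the group algebra F[G]). Then V₁ and V₂ are isomorphic as representations of G if and only if their characters are equal, i.e., tr(ρ₁(g)) = tr(ρ₂(g)) for every g ∈ G. -/
open Module in
theorem aux_trace_equiv {F A M N : Type*} [Field F] [Ring A] [Algebra F A]
    [AddCommGroup M] [Module F M] [Module A M] [IsScalarTower F A M]
    [AddCommGroup N] [Module F N] [Module A N] [IsScalarTower F A N]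
    (e : M ≃ₗ[A] N) (a : A) :
    LinearMap.trace F M (Algebra.lsmul F F M a) = LinearMap.trace F N (Algebra.lsmul F F N a) := by
  rw [← LinearMap.trace_conj' (Algebra.lsmul F F M a) (e.restrictScalars F)]
  congr 1
  ext x
  simp [LinearEquiv.conj_apply]

theorem aux_trace_prod {F A M N : Type*} [Field F] [Ring A] [Algebra F A]
    [AddCommGroup M] [Module F M] [Module A M] [IsScalarTower F A M]
    [AddCommGroup N] [Module F N] [Module A N] [IsScalarTower F A N]
    [FiniteDimensional F M] [FiniteDimensional F N] (a : A) :
    LinearMap.trace F (M × N) (Algebra.lsmul F F (M × N) a) =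
      LinearMap.trace F M (Algebra.lsmul F F M a) + LinearMap.trace F N (Algebra.lsmul F F N a) := by
  rw [← LinearMap.trace_prodMap']
  congr 1

theorem aux_density {F A M N : Type*} [Field F] [Ring A] [Algebra F A]
    [AddCommGroup M] [Module F M] [Module A M] [IsScalarTower F A M]
    [AddCommGroup N] [Module F N] [Module A N] [IsScalarTower F A N]
    [FiniteDimensional F M] [FiniteDimensional F N]
    [IsSemisimpleModule A M] [IsSemisimpleModule A N]
    (h₁ : ∀ f : M →ₗ[A] N, f = 0) (h₂ : ∀ f : N →ₗ[A] M, f = 0) :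
    ∃ a : A, (∀ m : M, a • m = m) ∧ (∀ n : N, a • n = 0) := by
  let p : Module.End (Module.End A (M × N)) (M × N) :=
    { toFun := fun x => (x.1, 0)
      map_add' := fun x y => by simp
      map_smul' := fun f x => by
        have e1 : (f (x.1, 0)).2 = 0 :=
          LinearMap.congr_fun (h₁ (LinearMap.snd A M N ∘ₗ f ∘ₗ LinearMap.inl A M N)) x.1
        have e2 : (f (0, x.2)).1 = 0 :=
          LinearMap.congr_fun (h₂ (LinearMap.fst A M N ∘ₗ f ∘ₗ LinearMap.inr A M N)) x.2
        have e3 : f x = f (x.1, 0) + f (0, x.2) := by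
          rw [← map_add]; simp
        simp only [Module.End.smul_def, RingHom.id_apply]
        ext
        · rw [e3]; simp [e2]
        · simp [e1] }
  have : IsSemisimpleModule A (M × N) := by
    have h : IsSemisimpleModule A (⊤ : Submodule A (M × N)) := by
      rw [← LinearMap.sup_range_inl_inr]
      exact .sup (.range _) (.range _)
    exact .congr Submodule.topEquiv.symm
  obtain ⟨s, hs⟩ := Module.Finite.fg_top (R := F) (M := M × N)
  obtain ⟨a, ha⟩ := jacobson_density p s
  have key : ∀ x : M × N, a • x = (x.1, 0) := by
    intro x
    induction hs.ge (trivial : x ∈ ⊤) using Submodule.span_induction with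
    | mem m hm => exact (ha m hm).symm
    | zero => simp; rfl
    | add x y _ _ h₁ h₂ => rw [smul_add, h₁, h₂]; simp
    | smul g x _ h =>
      have : a • g • x = g • a • x := (Algebra.lsmul F F (M × N) a).map_smul g x
      rw [this, h]; simp
  exact ⟨a, fun m => congrArg Prod.fst (key (m, 0)), fun n => congrArg Prod.snd (key (0, n))⟩

theorem aux_main {F A : Type*} [Field F] [CharZero F] [Ring A] [Algebra F A] (n : ℕ) :
    ∀ (M : Type*) (N : Type*) [AddCommGroup M] [Module F M] [Module A M] [IsScalarTower F A M]
    [AddCommGroup N] [Module F N] [Module A N] [IsScalarTower F A N]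
    [FiniteDimensional F M] [FiniteDimensional F N]
    [IsSemisimpleModule A M] [IsSemisimpleModule A N],
    Module.finrank F M = n →
    (∀ a : A, LinearMap.trace F M (Algebra.lsmul F F M a) =
      LinearMap.trace F N (Algebra.lsmul F F N a)) → Nonempty (M ≃ₗ[A] N) := by
  induction n using Nat.strong_induction_on with
  | _ n ih =>
  intro M N _ _ _ _ _ _ _ _ _ _ _ _ hn htr
  by_cases hex : ∃ (C : Submodule A M) (D : Submodule A N), Nontrivial C ∧ Nonempty (C ≃ₗ[A] D)
  · obtain ⟨C, D, hC, ⟨e⟩⟩ := hex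
    obtain ⟨C', hC'⟩ := exists_isCompl C
    obtain ⟨D', hD'⟩ := exists_isCompl D
    let eM := Submodule.prodEquivOfIsCompl C C' hC'
    let eN := Submodule.prodEquivOfIsCompl D D' hD'
    have : FiniteDimensional F C := inferInstanceAs (FiniteDimensional F (C.restrictScalars F))
    have : FiniteDimensional F C' := inferInstanceAs (FiniteDimensional F (C'.restrictScalars F))
    have : FiniteDimensional F D := inferInstanceAs (FiniteDimensional F (D.restrictScalars F))
    have : FiniteDimensional F D' := inferInstanceAs (FiniteDimensional F (D'.restrictScalars F))
    have hlt : Module.finrank F C' < n := by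
      have h1 : Module.finrank F (C × C') = n := by
        rw [← hn]; exact (eM.restrictScalars F).finrank_eq
      have h2 : 0 < Module.finrank F C := Module.finrank_pos
      rw [Module.finrank_prod] at h1
      omega
    obtain ⟨e'⟩ := ih _ hlt C' D' rfl (fun a => by
      have h := htr a
      rw [← aux_trace_equiv eM, ← aux_trace_equiv eN, aux_trace_prod, aux_trace_prod,
        aux_trace_equiv e] at h
      exact add_left_cancel h)
    exact ⟨eM.symm.trans ((e.prodCongr e').trans eN)⟩
  · have h₁ : ∀ f : M →ₗ[A] N, f = 0 := by
      intro f
      by_contra hf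
      obtain ⟨C, hC⟩ := exists_isCompl (LinearMap.ker f)
      let e := LinearMap.kerComplementEquivRange f hC.symm
      have : Nontrivial (LinearMap.range f) := by
        rw [Submodule.nontrivial_iff_ne_bot]; simpa [LinearMap.range_eq_bot] using hf
      exact hex ⟨C, LinearMap.range f, e.toEquiv.nontrivial, ⟨e⟩⟩
    have h₂ : ∀ f : N →ₗ[A] M, f = 0 := by
      intro f
      by_contra hf
      obtain ⟨C, hC⟩ := exists_isCompl (LinearMap.ker f)
      let e := LinearMap.kerComplementEquivRange f hC.symm
      have : Nontrivial (LinearMap.range f) := by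
        rw [Submodule.nontrivial_iff_ne_bot]; simpa [LinearMap.range_eq_bot] using hf
      exact hex ⟨LinearMap.range f, C, this, ⟨e.symm⟩⟩
    have hM : Subsingleton M := by
      obtain ⟨a, ha, hb⟩ := aux_density (F := F) h₁ h₂
      have h := htr a
      have e1 : Algebra.lsmul F F M a = LinearMap.id := LinearMap.ext ha
      have e2 : Algebra.lsmul F F N a = 0 := LinearMap.ext hb
      rw [e1, e2, LinearMap.trace_id, map_zero] at h
      exact Module.finrank_zero_iff.mp (by exact_mod_cast h)
    have hN : Subsingleton N := by
      obtain ⟨a, ha, hb⟩ := aux_density (F := F) h₂ h₁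
      have h := htr a
      have e1 : Algebra.lsmul F F N a = LinearMap.id := LinearMap.ext ha
      have e2 : Algebra.lsmul F F M a = 0 := LinearMap.ext hb
      rw [e1, e2, LinearMap.trace_id, map_zero] at h
      exact Module.finrank_zero_iff.mp (by exact_mod_cast h.symm)
    exact ⟨LinearEquiv.ofSubsingleton M N⟩


/-- Bourbaki: Two finite-dimensional semisimple representations of a group
`G` over a field `F` of characteristic zero are isomorphic if and only if their
characters are equal. -/
theorem semisimple_reps_iso_iff_char_eq
    (F : Type*) [Field F] [CharZero F] (G : Type*) [Group G]
    (V₁ V₂ : Type*) [AddCommGroup V₁] [Module F V₁] [AddCommGroup V₂] [Module F V₂]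
    [FiniteDimensional F V₁] [FiniteDimensional F V₂]
    (ρ₁ : Representation F G V₁) (ρ₂ : Representation F G V₂)
    (h₁ : IsSemisimpleModule (MonoidAlgebra F G) ρ₁.asModule)
    (h₂ : IsSemisimpleModule (MonoidAlgebra F G) ρ₂.asModule) :
    (∃ e : V₁ ≃ₗ[F] V₂, ∀ g v, e (ρ₁ g v) = ρ₂ g (e v)) ↔
    (∀ g, LinearMap.trace F V₁ (ρ₁ g) = LinearMap.trace F V₂ (ρ₂ g)) := by
  constructor
  · rintro ⟨e, he⟩ g
    rw [← LinearMap.trace_conj' (ρ₁ g) e]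
    congr 1
    ext x
    simp [LinearEquiv.conj_apply, he]
  · intro h
    have htr : ∀ a : MonoidAlgebra F G,
        LinearMap.trace F V₁ (ρ₁.asAlgebraHom a) = LinearMap.trace F V₂ (ρ₂.asAlgebraHom a) := by
      intro a
      induction a using MonoidAlgebra.induction_linear with
      | zero => simp
      | add x y hx hy => rw [map_add, map_add, map_add, map_add, hx, hy]
      | single g r =>
        rw [Representation.asAlgebraHom_single, Representation.asAlgebraHom_single, map_smul,
          map_smul, h]
    letI m₁ : Module (MonoidAlgebra F G) V₁ := Module.compHom V₁ ρ₁.asAlgebraHom.toRingHom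
    letI m₂ : Module (MonoidAlgebra F G) V₂ := Module.compHom V₂ ρ₂.asAlgebraHom.toRingHom
    have t₁ : IsScalarTower F (MonoidAlgebra F G) V₁ :=
      ⟨fun t x v => LinearMap.congr_fun (map_smul ρ₁.asAlgebraHom t x) v⟩
    have t₂ : IsScalarTower F (MonoidAlgebra F G) V₂ :=
      ⟨fun t x v => LinearMap.congr_fun (map_smul ρ₂.asAlgebraHom t x) v⟩
    have s₁ : IsSemisimpleModule (MonoidAlgebra F G) V₁ := h₁
    have s₂ : IsSemisimpleModule (MonoidAlgebra F G) V₂ := h₂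
    obtain ⟨e⟩ := aux_main (F := F) (A := MonoidAlgebra F G) _ V₁ V₂ rfl htr
    refine ⟨e.restrictScalars F, fun g v => ?_⟩
    have h1 : MonoidAlgebra.of F G g • v = ρ₁ g v :=
      LinearMap.congr_fun (ρ₁.asAlgebraHom_of g) v
    have h2 : MonoidAlgebra.of F G g • e v = ρ₂ g (e v) :=
      LinearMap.congr_fun (ρ₂.asAlgebraHom_of g) (e v)
    change e (ρ₁ g v) = ρ₂ g (e v)
    rw [← h1, ← h2, map_smul]
end

section
/- Let x₁, …, x_m be real numbers, each lying in the ℚ-subalgebra of ℝ generated by π (i.e., each xⱼ = pⱼ(π) for some polynomial pⱼ with rational coefficients). If x₁, …, x_m are linearly independent over ℚ, then x₁, …, x_m are linearly independent over the subfield of ℝ consisting of all real numbers that are algebraic over ℚ. -/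
open Polynomial

theorem aux_exists_poly {K : Type*} [Field K] [NumberField K] {ι : Type*} (T : Finset ι) (a : ι → K)
    (ha : ∀ S ∈ T, a S ≠ 0) :
    ∃ f : ℤ[X], f.eval 0 ≠ 0 ∧ ∀ S ∈ T, aeval (a S) f = 0 := by
  have h1 : ∀ S ∈ T, ∃ f : ℤ[X], f.eval 0 ≠ 0 ∧ aeval (a S) f = 0 := by
    intro S hS
    have : IsAlgebraic ℤ (a S) := by
      have := Algebra.IsAlgebraic.isAlgebraic (R := ℚ) (a S)
      exact (IsFractionRing.isAlgebraic_iff ℤ ℚ K).mpr this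
    obtain ⟨q, h1, h2⟩ := this.exists_nonzero_coeff_and_aeval_eq_zero (mem_nonZeroDivisors_of_ne_zero (ha S hS))
    exact ⟨q, by rwa [← coeff_zero_eq_eval_zero], h2⟩
  choose! f hf using h1
  refine ⟨∏ S ∈ T, f S, ?_, fun S hS => ?_⟩
  · rw [eval_prod]
    exact Finset.prod_ne_zero_iff.mpr fun S hS => (hf S hS).1
  · rw [map_prod]
    exact Finset.prod_eq_zero hS (hf S hS).2

theorem aux_integral {K : Type*} [Field K] (D : ℤ) (x : K) (h : IsIntegral ℤ (D • x))
    (g : ℤ[X]) (N : ℕ) (hN : g.natDegree ≤ N) : IsIntegral ℤ ((D ^ N) • aeval x g) := by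
  rw [aeval_eq_sum_range, Finset.smul_sum]
  refine IsIntegral.sum _ fun i hi => ?_
  have hi' : i ≤ N := by
    have := Finset.mem_range.mp hi
    omega
  have : D ^ N • g.coeff i • x ^ i = (D ^ (N - i) * g.coeff i) • (D • x) ^ i := by
    simp only [zsmul_eq_mul, mul_pow]
    push_cast
    rw [← Nat.sub_add_cancel hi', pow_add]
    simp
    ring
  rw [this]
  exact (h.pow i).smul _

theorem aux_main_s18 {K : Type*} [Field K] [NumberField K] [IsGalois ℚ K] (φ : K →+* ℂ) (θ : K) :
    Complex.exp (φ θ) ≠ -1 := by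
  classical
  intro hθ
  let G := K ≃ₐ[ℚ] K
  let a : Finset G → K := fun S => ∑ σ ∈ S, σ θ
  have hsum : ∑ S : Finset G, Complex.exp (φ (a S)) = 0 := by
    have h0 : 1 + Complex.exp (φ ((1 : G) θ)) = 0 := by
      change 1 + Complex.exp (φ θ) = 0
      rw [hθ]
      ring
    have h := Finset.prod_one_add (f := fun σ : G => Complex.exp (φ (σ θ))) Finset.univ
    rw [Finset.prod_eq_zero (Finset.mem_univ (1 : G)) h0] at h
    rw [h, Finset.powerset_univ]
    refine Finset.sum_congr rfl fun S _ => ?_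
    simp only [a, map_sum, Complex.exp_sum]
  let T : Finset (Finset G) := Finset.univ.filter fun S => a S ≠ 0
  let k : ℕ := (Finset.univ.filter fun S : Finset G => ¬ a S ≠ 0).card
  have hk : 0 < k := Finset.card_pos.mpr ⟨∅, by simp [a]⟩
  have hsum2 : ∑ S ∈ T, Complex.exp (φ (a S)) + k = 0 := by
    rw [← hsum, ← Finset.sum_filter_add_sum_filter_not Finset.univ (fun S => a S ≠ 0)]
    congr 1
    rw [Finset.sum_congr rfl (g := fun _ => (1 : ℂ))]
    · simp [k]
    · intro S hS
      have : a S = 0 := by simpa using hS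
      simp [this]
  obtain ⟨f, hf0, hf⟩ := aux_exists_poly T a (fun S hS => (Finset.mem_filter.mp hS).2)
  have hfne : f ≠ 0 := by rintro rfl; simp at hf0
  let D := f.leadingCoeff
  have hD : D ≠ 0 := leadingCoeff_ne_zero.mpr hfne
  have hDint : ∀ S ∈ T, IsIntegral ℤ (D • a S) := fun S hS =>
    isIntegral_leadingCoeff_smul f (a S) (hf S hS)
  have hint : ∀ (g : ℤ[X]) (N : ℕ), g.natDegree ≤ N →
      ∃ M : ℤ, (M : K) = D ^ N • ∑ S ∈ T, aeval (a S) g := by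
    intro g N hN
    have h1 : IsIntegral ℤ (D ^ N • ∑ S ∈ T, aeval (a S) g) := by
      rw [Finset.smul_sum]
      exact IsIntegral.sum _ fun S hS => aux_integral D _ (hDint S hS) g N hN
    have h2 : ∀ τ : G, τ (D ^ N • ∑ S ∈ T, aeval (a S) g) = D ^ N • ∑ S ∈ T, aeval (a S) g := by
      intro τ
      rw [map_zsmul, map_sum]
      congr 1
      have hτ : ∀ S, a ((Equiv.mulLeft τ).finsetCongr S) = τ (a S) := by
        intro S
        simp [a, map_sum]
        rfl
      refine Finset.sum_equiv (Equiv.mulLeft τ).finsetCongr ?_ ?_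
      · intro S
        simp only [T, Finset.mem_filter, Finset.mem_univ, true_and, hτ]
        simp
      · intro S _
        rw [hτ]
        exact (aeval_algHom_apply (τ.toAlgHom.restrictScalars ℤ) (a S) g).symm
    obtain ⟨q, hq⟩ := (IsGalois.mem_range_algebraMap_iff_fixed _).mpr h2
    rw [← hq] at h1 ⊢
    have h3 : IsIntegral ℤ q := (isIntegral_algebraMap_iff (algebraMap ℚ K).injective).mp h1
    obtain ⟨M, rfl⟩ := IsIntegrallyClosed.isIntegral_iff.mp h3
    exact ⟨M, by simp⟩
  obtain ⟨c, hc⟩ := LindemannWeierstrass.exp_polynomial_approx f hf0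
  let d := f.natDegree
  have key : ∀ p : ℕ, p.Prime → p > (eval 0 f).natAbs → p > k → p > D.natAbs →
      1 ≤ T.card * (|(D:ℝ)| ^ (p * d) * (c ^ p / (p - 1).factorial)) := by
    intro p hp h1 h2 h3
    obtain ⟨n, hn, g, hg, hb⟩ := hc p h1 hp
    obtain ⟨M, hM⟩ := hint g (p * d) (hg.trans (Nat.sub_le _ _))
    have hM' : (M : ℂ) = D ^ (p * d) * ∑ S ∈ T, aeval (φ (a S)) g := by
      have := congrArg φ hM
      rw [map_intCast, map_zsmul, map_sum] at this
      rw [this, zsmul_eq_mul]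
      push_cast
      congr 1
      refine Finset.sum_congr rfl fun S _ => ?_
      exact (aeval_algHom_apply (φ.toIntAlgHom) (a S) g).symm
    have hne : D ^ (p * d) * n * k + p * M ≠ 0 := by
      intro h
      have : (p : ℤ) ∣ D ^ (p * d) * n * k := ⟨-M, by linarith⟩
      have hpi := Nat.prime_iff_prime_int.mp hp
      rcases hpi.dvd_or_dvd this with h | h
      · rcases hpi.dvd_or_dvd h with h | h
        · have h := hpi.dvd_of_dvd_pow h
          have := Nat.le_of_dvd (Int.natAbs_pos.mpr hD) (Int.natCast_dvd.mp h)
          omega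
        · exact hn h
      · have := Nat.le_of_dvd hk (Int.natCast_dvd_natCast.mp h)
        omega
    have h4 : (1 : ℝ) ≤ ‖((D ^ (p * d) * n * k + p * M : ℤ) : ℂ)‖ := by
      rw [Complex.norm_intCast]
      exact_mod_cast Int.one_le_abs hne
    refine h4.trans ?_
    have h5 : ((D ^ (p * d) * n * k + p * M : ℤ) : ℂ) =
        -∑ S ∈ T, D ^ (p * d) * (n • Complex.exp (φ (a S)) - p • aeval (φ (a S)) g) := by
      push_cast
      rw [hM', ← Finset.mul_sum, Finset.sum_sub_distrib, ← Finset.smul_sum, ← Finset.smul_sum,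
        eq_neg_of_add_eq_zero_left hsum2]
      simp only [zsmul_eq_mul, nsmul_eq_mul]
      ring
    rw [h5, norm_neg, ← nsmul_eq_mul]
    refine (norm_sum_le _ _).trans (Finset.sum_le_card_nsmul _ _ _ fun S hS => ?_)
    rw [norm_mul, norm_pow, Complex.norm_intCast]
    refine mul_le_mul_of_nonneg_left (hb ?_) (by positivity)
    rw [mem_aroots]
    refine ⟨hfne, ?_⟩
    have := aeval_algHom_apply (φ.toIntAlgHom) (a S) f
    rw [hf S hS, map_zero] at this
    exact this
  let B : ℝ := |(D:ℝ)| ^ d * c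
  have hlim : Filter.Tendsto (fun p : ℕ => T.card * (B * (B ^ p / p.factorial)))
      Filter.atTop (nhds 0) := by
    have := ((FloorSemiring.tendsto_pow_div_factorial_atTop B).const_mul B).const_mul (T.card : ℝ)
    simpa using this
  obtain ⟨N, hN⟩ := Filter.eventually_atTop.mp (hlim.eventually (gt_mem_nhds one_pos))
  obtain ⟨p, hpN, hp⟩ := Nat.exists_infinite_primes (N + (eval 0 f).natAbs + k + D.natAbs + 2)
  have h1 := key p hp (by omega) (by omega) (by omega)
  have h2 := hN (p - 1) (by omega)
  refine absurd (lt_of_le_of_lt h1 ?_) (lt_irrefl _)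
  convert h2 using 2
  rw [mul_comm p d, pow_mul, ← mul_div_assoc, ← mul_pow, ← mul_div_assoc, ← pow_succ',
    Nat.sub_add_cancel hp.one_le]

theorem aux_pi : Transcendental ℚ Real.pi := by
  intro hpi
  have h1 : IsAlgebraic ℚ (Real.pi * Complex.I : ℂ) := by
    refine IsAlgebraic.mul ?_ ?_
    · exact hpi.algebraMap (A := ℂ)
    · exact ⟨X ^ 2 + 1, (by
        intro h
        simpa using congrArg (eval 0) h), by simp⟩
  let q := minpoly ℚ (Real.pi * Complex.I : ℂ)
  have hs : (q.map (algebraMap ℚ ℂ)).Splits := IsAlgClosed.splits _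
  let K := IntermediateField.adjoin ℚ (q.rootSet ℂ)
  have : q.IsSplittingField ℚ K := IntermediateField.adjoin_rootSet_isSplittingField hs
  have : FiniteDimensional ℚ K := IsSplittingField.finiteDimensional K q
  have : NumberField K := ⟨⟩
  have : Normal ℚ K := Normal.of_isSplittingField q
  have : IsGalois ℚ K := ⟨⟩
  have hm : (Real.pi * Complex.I : ℂ) ∈ K := by
    apply IntermediateField.subset_adjoin
    rw [mem_rootSet]
    exact ⟨minpoly.ne_zero h1.isIntegral, minpoly.aeval _ _⟩
  exact aux_main_s18 (algebraMap K ℂ) ⟨_, hm⟩ Complex.exp_pi_mul_I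

/-- Real numbers lying in the ℚ-subalgebra of ℝ generated by `π` (i.e.
rational polynomial expressions in `π`) that are linearly independent over `ℚ` are
linearly independent over the field of real algebraic numbers: no nontrivial linear
combination with real algebraic coefficients vanishes. -/
theorem polynomials_in_pi_linearIndependent_over_algebraic
    (m : ℕ) (x : Fin m → ℝ)
    (hx : ∀ j, ∃ p : Polynomial ℚ, x j = Polynomial.aeval Real.pi p)
    (hli : LinearIndependent ℚ x) :
    ∀ c : Fin m → ℝ, (∀ j, IsAlgebraic ℚ (c j)) → ∑ j, c j * x j = 0 → c = 0 := by
  intro c hc hsum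
  choose p hp using hx
  let A := algebraicClosure ℚ ℝ
  have : Algebra.IsAlgebraic ℚ A := algebraicClosure.isAlgebraic ℚ ℝ
  have htr : Transcendental A Real.pi := by
    intro h
    exact aux_pi (h.restrictScalars ℚ)
  let c' : Fin m → A := fun j => ⟨c j, mem_algebraicClosure_iff.mpr (hc j)⟩
  have h0 : ∑ j, C (c' j) * (p j).map (algebraMap ℚ A) = 0 := by
    refine (transcendental_iff.mp htr) _ ?_
    rw [map_sum, ← hsum]
    refine Finset.sum_congr rfl fun j _ => ?_
    rw [map_mul, aeval_C, aeval_map_algebraMap, ← hp]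
    rfl
  have h1 : ∀ n, ∑ j, (p j).coeff n • c j = 0 := by
    intro n
    have := congrArg (fun q => algebraMap A ℝ (q.coeff n)) h0
    simp only [finsetSum_coeff, coeff_C_mul, coeff_map, coeff_zero, map_zero, map_sum, map_mul] at this
    rw [← this]
    refine Finset.sum_congr rfl fun j _ => ?_
    rw [Algebra.smul_def, mul_comm]
    rfl
  funext j
  refine (Module.forall_dual_apply_eq_zero_iff ℚ (c j)).mp fun φ => ?_
  have h2 : ∑ j, C (φ (c j)) * p j = 0 := by
    ext n
    have := congrArg φ (h1 n)
    simp only [map_sum, map_smul, map_zero, smul_eq_mul] at this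
    simp only [finsetSum_coeff, coeff_C_mul, coeff_zero]
    rw [← this]
    exact Finset.sum_congr rfl fun j _ => mul_comm _ _
  have h3 : ∑ j, φ (c j) • x j = 0 := by
    have := congrArg (aeval Real.pi) h2
    rw [map_sum, map_zero] at this
    rw [← this]
    refine Finset.sum_congr rfl fun j _ => ?_
    rw [map_mul, aeval_C, ← hp, Algebra.smul_def]
  exact Fintype.linearIndependent_iff.mp hli _ h3 j
end
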